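/- arXiv:1810.10471 — 3 statements merged into one kernel-verified Lean document; each statement's English description precedes it below -/
import Mathlib

section
/- For every n ∈ ℕ and every p ∈ [P_n(ℝ²)]², there exist a unique polynomial r ∈ P_{n+1}(ℝ²) with r(0,0) = 0 lying in the span of the monomials of total degree between 1 and n+1, and a unique q ∈ P_{n-1}(ℝ²), such that p = ∇r + x⊥·q, where x⊥(x,y) := (y, -x). -/
/-!
The decomposition is linear in `p`, so existence is checked on the fields `(x^a y^b, 0)` and
`(0, x^a y^b)`, where it is given by explicit formulas: with `k = a + b + 1`,
`(x^a y^b, 0) = ∇(x^(a+1) y^b / k) + (b / k) x^a y^(b-1) x⊥` and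
`(0, x^a y^b) = ∇(x^a y^(b+1) / k) - (a / k) x^(a-1) y^b x⊥`
(`decomp_fst`, `decomp_snd`).

For uniqueness, the difference of two decompositions satisfies `∇r + q x⊥ = 0`. Since `x⊥` is
orthogonal to the position vector, the radial derivative of `r` vanishes, so `r` is constant along
rays from the origin and hence zero (`eq_zero_of_radial`). Then `q x⊥ = 0`, so `q` vanishes away
from the origin, and everywhere by continuity (`eq_zero_of_smul_xperp`).
-/

open Matrix

noncomputable section

/-- Evaluation of a 2-variable polynomial as a function on `ℝ × ℝ`, as a linear map. -/
def evalLM : MvPolynomial (Fin 2) ℝ →ₗ[ℝ] ((ℝ × ℝ) → ℝ) where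
  toFun p := fun z => MvPolynomial.eval ![z.1, z.2] p
  map_add' p q := funext fun z => by simp
  map_smul' c p := funext fun z => by simp [MvPolynomial.smul_eval]

/-- The space of polynomial functions `ℝ² → ℝ` of total degree at most `n`. -/
def Pn (n : ℕ) : Submodule ℝ ((ℝ × ℝ) → ℝ) :=
  (MvPolynomial.restrictTotalDegree (Fin 2) ℝ n).map evalLM

/-- The space of vector fields `ℝ² → ℝ²` with both components in `Pn n`. -/
def PnVec (n : ℕ) : Submodule ℝ ((ℝ × ℝ) → ℝ × ℝ) :=
  (Pn n).comap ((LinearMap.fst ℝ ℝ ℝ).compLeft (ℝ × ℝ)) ⊓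
    (Pn n).comap ((LinearMap.snd ℝ ℝ ℝ).compLeft (ℝ × ℝ))

def entryLM (i j : Fin 2) : Matrix (Fin 2) (Fin 2) ℝ →ₗ[ℝ] ℝ where
  toFun M := M i j
  map_add' := fun _ _ => rfl
  map_smul' := fun _ _ => rfl

/-- The space of `2×2`-matrix valued maps with all entries in `Pn n`. -/
def PnMat (n : ℕ) : Submodule ℝ ((ℝ × ℝ) → Matrix (Fin 2) (Fin 2) ℝ) :=
  ⨅ i, ⨅ j, (Pn n).comap ((entryLM i j).compLeft (ℝ × ℝ))

/-- `P_{n-1}` with the convention `P_{-1} = {0}`. -/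
def Pprev : ℕ → Submodule ℝ ((ℝ × ℝ) → ℝ)
  | 0 => ⊥
  | m + 1 => Pn m

/-- Gradient of a scalar field via the Fréchet derivative. -/
def grad (f : (ℝ × ℝ) → ℝ) (z : ℝ × ℝ) : ℝ × ℝ :=
  (fderiv ℝ f z (1, 0), fderiv ℝ f z (0, 1))

/-- The vector field `x⊥(x, y) = (y, -x)`. -/
def xperp : (ℝ × ℝ) → ℝ × ℝ := fun z => (z.2, -z.1)

/-- Scaled monomial `m_α` associated with centroid `(xE, yE)` and diameter `hE`. -/
def smono (xE yE hE : ℝ) (α : ℕ × ℕ) : (ℝ × ℝ) → ℝ :=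
  fun z => ((z.1 - xE) / hE) ^ α.1 * ((z.2 - yE) / hE) ^ α.2

/-- Scaled perpendicular vector field `m⊥`. -/
def mperp (xE yE hE : ℝ) : (ℝ × ℝ) → ℝ × ℝ :=
  fun z => ((z.2 - yE) / hE, -((z.1 - xE) / hE))

/-- Jacobian matrix of a vector field via Fréchet derivatives. -/
def jmat (v : (ℝ × ℝ) → ℝ × ℝ) (z : ℝ × ℝ) : Matrix (Fin 2) (Fin 2) ℝ :=
  !![(fderiv ℝ (fun w => (v w).1) z (1, 0)), (fderiv ℝ (fun w => (v w).1) z (0, 1));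
     (fderiv ℝ (fun w => (v w).2) z (1, 0)), (fderiv ℝ (fun w => (v w).2) z (0, 1))]

/-- Symmetric part of the gradient of a vector field. -/
def eps (v : (ℝ × ℝ) → ℝ × ℝ) (z : ℝ × ℝ) : Matrix (Fin 2) (Fin 2) ℝ :=
  (2⁻¹ : ℝ) • (jmat v z + (jmat v z)ᵀ)

/-- Frobenius inner product of `2×2` matrices. -/
def frob (A B : Matrix (Fin 2) (Fin 2) ℝ) : ℝ := ∑ i, ∑ j, A i j * B i j

/-- The monomial function `x^a y^b`. -/
def mono (a b : ℕ) : (ℝ × ℝ) → ℝ := fun z => z.1 ^ a * z.2 ^ b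

lemma evalLM_monomial (s : Fin 2 →₀ ℕ) (c : ℝ) :
    evalLM (MvPolynomial.monomial s c) = c • mono (s 0) (s 1) := by
  funext z
  simp [evalLM, mono, MvPolynomial.eval_monomial, Finsupp.prod_fintype, Fin.prod_univ_two]

lemma mono_mem {n a b : ℕ} (h : a + b ≤ n) : mono a b ∈ Pn n := by
  refine ⟨MvPolynomial.monomial (Finsupp.single 0 a + Finsupp.single 1 b) 1, ?_, ?_⟩
  · rw [SetLike.mem_coe, MvPolynomial.mem_restrictTotalDegree]
    refine (MvPolynomial.totalDegree_monomial_le _ _).trans ?_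
    rw [Finsupp.sum_fintype _ _ (fun _ => rfl)]
    simpa [Fin.sum_univ_two] using h
  · rw [evalLM_monomial]
    simp

/-- The monomials of degree at most `n` span `Pn n`. -/
lemma Pn_le {n : ℕ} {S : Submodule ℝ ((ℝ × ℝ) → ℝ)}
    (h : ∀ a b, a + b ≤ n → mono a b ∈ S) : Pn n ≤ S := by
  rintro _ ⟨p, hp, rfl⟩
  rw [SetLike.mem_coe, MvPolynomial.mem_restrictTotalDegree] at hp
  rw [← MvPolynomial.support_sum_monomial_coeff p, map_sum]
  refine Submodule.sum_mem _ fun s hs => ?_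
  rw [evalLM_monomial]
  refine S.smul_mem _ (h _ _ ?_)
  have h1 := (MvPolynomial.le_totalDegree hs).trans hp
  rw [Finsupp.sum_fintype _ _ (fun _ => rfl)] at h1
  simpa [Fin.sum_univ_two] using h1

lemma differentiable_of_mem {n : ℕ} {f : (ℝ × ℝ) → ℝ} (hf : f ∈ Pn n) :
    Differentiable ℝ f := by
  let S : Submodule ℝ ((ℝ × ℝ) → ℝ) :=
    { carrier := {f | Differentiable ℝ f}
      add_mem' := fun ha hb => Differentiable.add ha hb
      zero_mem' := differentiable_const 0
      smul_mem' := fun c _ hf => Differentiable.const_smul hf c }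
  have h : Pn n ≤ S := Pn_le fun a b _ => by
    change Differentiable ℝ (fun z : ℝ × ℝ => z.1 ^ a * z.2 ^ b)
    fun_prop
  exact h hf

lemma continuous_of_mem_Pprev {n : ℕ} {f : (ℝ × ℝ) → ℝ} (hf : f ∈ Pprev n) : Continuous f := by
  cases n with
  | zero =>
    rw [show f = 0 from hf]
    exact continuous_const
  | succ m => exact (differentiable_of_mem (n := m) hf).continuous

lemma grad_add {f g : (ℝ × ℝ) → ℝ} (hf : Differentiable ℝ f) (hg : Differentiable ℝ g)
    (z : ℝ × ℝ) : grad (f + g) z = grad f z + grad g z := by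
  simp [grad, fderiv_add (hf z) (hg z)]

lemma grad_smul (c : ℝ) {f : (ℝ × ℝ) → ℝ} (hf : Differentiable ℝ f)
    (z : ℝ × ℝ) : grad (c • f) z = c • grad f z := by
  simp [grad, fderiv_const_smul (hf z)]

lemma grad_mono (a b : ℕ) (z : ℝ × ℝ) :
    grad (mono a b) z =
      (a * z.1 ^ (a - 1) * z.2 ^ b, b * z.1 ^ a * z.2 ^ (b - 1)) := by
  have h1 : HasFDerivAt (fun w : ℝ × ℝ => w.1) (ContinuousLinearMap.fst ℝ ℝ ℝ) z :=
    hasFDerivAt_fst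
  have h2 : HasFDerivAt (fun w : ℝ × ℝ => w.2) (ContinuousLinearMap.snd ℝ ℝ ℝ) z :=
    hasFDerivAt_snd
  have h := ((h1.pow a).mul (h2.pow b)).fderiv
  change fderiv ℝ (mono a b) z = _ at h
  rw [grad, h]
  ext <;> simp <;> ring

/-- The vector fields admitting a decomposition `∇r + q x⊥` with `r ∈ P_{n+1}`, `r(0,0) = 0` and
`q ∈ P_{n-1}`. -/
def decomposable (n : ℕ) : Submodule ℝ ((ℝ × ℝ) → ℝ × ℝ) where
  carrier := {p | ∃ r q, r ∈ Pn (n + 1) ∧ r (0, 0) = 0 ∧ q ∈ Pprev n ∧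
    ∀ z, p z = grad r z + q z • xperp z}
  zero_mem' := ⟨0, 0, zero_mem _, rfl, zero_mem _, fun z => by simp [grad, Prod.ext_iff]⟩
  add_mem' := by
    rintro p p' ⟨r, q, hr, h0, hq, h⟩ ⟨r', q', hr', h0', hq', h'⟩
    refine ⟨r + r', q + q', add_mem hr hr', by simp [h0, h0'], add_mem hq hq', fun z => ?_⟩
    rw [Pi.add_apply, h, h', grad_add (differentiable_of_mem hr) (differentiable_of_mem hr'),
      Pi.add_apply, add_smul]
    abel
  smul_mem' := by
    rintro c p ⟨r, q, hr, h0, hq, h⟩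
    refine ⟨c • r, c • q, Submodule.smul_mem _ _ hr, by simp [h0], Submodule.smul_mem _ _ hq,
      fun z => ?_⟩
    rw [Pi.smul_apply, h, grad_smul c (differentiable_of_mem hr), smul_add, smul_smul,
      Pi.smul_apply, smul_eq_mul]

lemma mono_mem_Pprev {n a b : ℕ} (h : a + b + 1 ≤ n) : mono a b ∈ Pprev n := by
  obtain _ | m := n
  · omega
  · exact mono_mem (n := m) (by omega)

lemma decomp_fst {n a b : ℕ} (h : a + b ≤ n) :
    (fun z => (mono a b z, 0)) ∈ decomposable n := by
  have hk : (a + b + 1 : ℝ) ≠ 0 := by positivity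
  refine ⟨(a + b + 1 : ℝ)⁻¹ • mono (a + 1) b, (b / (a + b + 1) : ℝ) • mono a (b - 1),
    Submodule.smul_mem _ _ (mono_mem (by omega)), by simp [mono], ?_, fun z => ?_⟩
  -- For `b = 0` the exponent `b - 1` truncates, but the coefficient vanishes.
  · obtain _ | b := b
    · simp
    · exact Submodule.smul_mem _ _ (mono_mem_Pprev (by omega))
  · rw [grad_smul _ (differentiable_of_mem (mono_mem le_rfl)), grad_mono]
    obtain _ | b := b <;> ext <;> simp [mono, xperp] <;> simp at hk <;> field_simp <;> ring

lemma decomp_snd {n a b : ℕ} (h : a + b ≤ n) :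
    (fun z => (0, mono a b z)) ∈ decomposable n := by
  have hk : (a + b + 1 : ℝ) ≠ 0 := by positivity
  refine ⟨(a + b + 1 : ℝ)⁻¹ • mono a (b + 1), (-(a / (a + b + 1)) : ℝ) • mono (a - 1) b,
    Submodule.smul_mem _ _ (mono_mem (by omega)), by simp [mono], ?_, fun z => ?_⟩
  -- For `a = 0` the exponent `a - 1` truncates, but the coefficient vanishes.
  · obtain _ | a := a
    · simp
    · exact Submodule.smul_mem _ _ (mono_mem_Pprev (by omega))
  · rw [grad_smul _ (differentiable_of_mem (mono_mem le_rfl)), grad_mono]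
    obtain _ | a := a <;> ext <;> simp [mono, xperp] <;> simp at hk <;> field_simp <;> ring

lemma PnVec_le_decomposable (n : ℕ) : PnVec n ≤ decomposable n := by
  rintro p ⟨h1, h2⟩
  have e1 : Pn n ≤ (decomposable n).comap ((LinearMap.inl ℝ ℝ ℝ).compLeft (ℝ × ℝ)) :=
    Pn_le fun a b h => decomp_fst h
  have e2 : Pn n ≤ (decomposable n).comap ((LinearMap.inr ℝ ℝ ℝ).compLeft (ℝ × ℝ)) :=
    Pn_le fun a b h => decomp_snd h
  have h : (LinearMap.inl ℝ ℝ ℝ).compLeft (ℝ × ℝ) ((LinearMap.fst ℝ ℝ ℝ).compLeft (ℝ × ℝ) p) +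
      (LinearMap.inr ℝ ℝ ℝ).compLeft (ℝ × ℝ) ((LinearMap.snd ℝ ℝ ℝ).compLeft (ℝ × ℝ) p) ∈
      decomposable n := add_mem (e1 h1) (e2 h2)
  convert h using 1
  funext z
  ext <;> simp

lemma fderiv_apply_eq (f : (ℝ × ℝ) → ℝ) (z v : ℝ × ℝ) :
    fderiv ℝ f z v = v.1 * (grad f z).1 + v.2 * (grad f z).2 := by
  have hv : v = v.1 • ((1, 0) : ℝ × ℝ) + v.2 • ((0, 1) : ℝ × ℝ) := by ext <;> simp
  conv_lhs => rw [hv]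
  simp only [map_add, map_smul, smul_eq_mul, grad]

/-- A differentiable function with vanishing radial derivative is constant along rays, so it
vanishes if it vanishes at the origin. -/
lemma eq_zero_of_radial {f : (ℝ × ℝ) → ℝ} (hf : Differentiable ℝ f) (h0 : f (0, 0) = 0)
    (h : ∀ z, fderiv ℝ f z z = 0) : f = 0 := by
  funext z
  have hd : ∀ t : ℝ, HasDerivAt (fun t : ℝ => f (t • z)) (fderiv ℝ f (t • z) z) t := fun t => by
    have h1 : HasDerivAt (fun t : ℝ => t • z) z t := by
      simpa using (hasDerivAt_id t).smul_const z
    exact (hf (t • z)).hasFDerivAt.comp_hasDerivAt t h1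
  obtain ⟨c, hc, hc'⟩ := exists_hasDerivAt_eq_slope (fun t : ℝ => f (t • z)) _ zero_lt_one
    (fun t _ => (hd t).continuousAt.continuousWithinAt) (fun t _ => hd t)
  have h2 := h (c • z)
  rw [map_smul, smul_eq_mul, hc'] at h2
  have h3 : f ((0 : ℝ) • z) = 0 := by
    rw [zero_smul]
    exact h0
  simpa only [h3, mul_eq_zero, hc.1.ne', false_or, one_smul, sub_zero, div_one,
    Pi.zero_apply] using h2

/-- The field `x⊥` vanishes only at the origin, so continuity forces `q` to vanish there too. -/
lemma eq_zero_of_smul_xperp {q : (ℝ × ℝ) → ℝ} (hq : Continuous q)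
    (h : ∀ z, q z • xperp z = 0) : q = 0 := by
  refine hq.ext_on (dense_compl_singleton (0 : ℝ × ℝ)) continuous_const fun z hz => ?_
  refine (smul_eq_zero.1 (h z)).resolve_right fun hx => hz ?_
  simp only [xperp, Prod.mk_eq_zero, neg_eq_zero] at hx
  exact Prod.ext hx.2 hx.1

/-- For every `p ∈ [P_n(ℝ²)]²` there exist a unique `r ∈ P_{n+1}` with
vanishing constant term (i.e. `r (0,0) = 0`, so `r` lies in the span of the monomials of total
degree between `1` and `n+1`) and a unique `q ∈ P_{n-1}` with `p = ∇r + x⊥ q`. -/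
theorem polynomial_decomposition_unique (n : ℕ) (p : (ℝ × ℝ) → ℝ × ℝ) (hp : p ∈ PnVec n) :
    ∃! rq : ((ℝ × ℝ) → ℝ) × ((ℝ × ℝ) → ℝ),
      rq.1 ∈ Pn (n + 1) ∧ rq.1 (0, 0) = 0 ∧ rq.2 ∈ Pprev n ∧
        ∀ z, p z = grad rq.1 z + rq.2 z • xperp z := by
  obtain ⟨r, q, hr, h0, hq, h⟩ := PnVec_le_decomposable n hp
  refine ⟨(r, q), ⟨hr, h0, hq, h⟩, ?_⟩
  rintro ⟨r', q'⟩ ⟨hr', h0', hq', h'⟩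
  dsimp only at hr' h0' hq' h'
  have hd := differentiable_of_mem hr
  have hd' := differentiable_of_mem hr'
  have key : ∀ z, grad (r' - r) z + (q' - q) z • xperp z = 0 := fun z => by
    have e := (h' z).symm.trans (h z)
    have e2 : grad (r' - r) z = grad r' z - grad r z := by
      simp [grad, fderiv_sub (hd' z) (hd z)]
    rw [e2, Pi.sub_apply, sub_smul, ← sub_eq_zero.2 e]
    abel
  have hrr : r' - r = 0 := by
    refine eq_zero_of_radial (hd'.sub hd) (by simp [h0, h0']) fun z => ?_
    have k1 := congrArg Prod.fst (key z)
    have k2 := congrArg Prod.snd (key z)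
    simp only [xperp, Prod.fst_add, Prod.snd_add, Prod.smul_fst, Prod.smul_snd, Prod.fst_zero,
      Prod.snd_zero, smul_eq_mul] at k1 k2
    rw [fderiv_apply_eq]
    linear_combination z.1 * k1 + z.2 * k2
  have hqq : q' - q = 0 := by
    refine eq_zero_of_smul_xperp
      ((continuous_of_mem_Pprev hq').sub (continuous_of_mem_Pprev hq)) fun z => ?_
    have k := key z
    rw [hrr] at k
    simpa [-smul_eq_zero, grad, Prod.mk_zero_zero] using k
  rw [sub_eq_zero.1 hrr, sub_eq_zero.1 hqq]

end
end

section
/- Let (x_E, y_E) ∈ ℝ², h_E > 0, and let β = (β₁, β₂) be a multi-index with |β| = β₁ + β₂. Then the vector field (0, m_β) on ℝ² satisfies the identity (0, m_β) = (h_E/(|β|+1))·∇m_{(β₁, β₂+1)} − (β₁/(|β|+1))·m⊥·m_{(β₁-1, β₂)}, where the second summand is interpreted as the zero vector field when β₁ = 0 (its scalar coefficient β₁ vanishes in that case). -/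
/-!
With `X = (x - x_E) / h_E` and `Y = (y - y_E) / h_E`, the chain rule gives
`h_E ∇(X ^ β₁ Y ^ (β₂ + 1)) = (β₁ X ^ (β₁ - 1) Y ^ (β₂ + 1), (β₂ + 1) X ^ β₁ Y ^ β₂)`
(`grad_smono`). Subtracting `β₁ X ^ (β₁ - 1) Y ^ β₂ (Y, -X)` cancels the first component, and turns
the factor `β₂ + 1` of the second one into `β₁ + β₂ + 1`.
-/

open Matrix

noncomputable section

/-- Componentwise formula for the gradient of a scaled monomial. For `α.1 = 0` or `α.2 = 0` the
truncated exponent is harmless, since the factor in front of it vanishes. -/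
lemma grad_smono (xE yE hE : ℝ) (α : ℕ × ℕ) (z : ℝ × ℝ) :
    grad (smono xE yE hE α) z =
      ((α.1 : ℝ) * ((z.1 - xE) / hE) ^ (α.1 - 1) * hE⁻¹ * ((z.2 - yE) / hE) ^ α.2,
        (α.2 : ℝ) * ((z.2 - yE) / hE) ^ (α.2 - 1) * hE⁻¹ * ((z.1 - xE) / hE) ^ α.1) := by
  have hX : HasFDerivAt (fun w : ℝ × ℝ => (w.1 - xE) * hE⁻¹)
      (hE⁻¹ • ContinuousLinearMap.fst ℝ ℝ ℝ) z :=
    (hasFDerivAt_fst.sub_const xE).mul_const hE⁻¹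
  have hY : HasFDerivAt (fun w : ℝ × ℝ => (w.2 - yE) * hE⁻¹)
      (hE⁻¹ • ContinuousLinearMap.snd ℝ ℝ ℝ) z :=
    (hasFDerivAt_snd.sub_const yE).mul_const hE⁻¹
  have h := ((hX.pow α.1).mul (hY.pow α.2)).fderiv
  have e : smono xE yE hE α =
      (fun w : ℝ × ℝ => ((w.1 - xE) * hE⁻¹) ^ α.1) *
        (fun w : ℝ × ℝ => ((w.2 - yE) * hE⁻¹) ^ α.2) := rfl
  rw [grad, e, h]
  ext <;> simp [div_eq_mul_inv] <;> ring

/-- `(0, m_β) = (h_E/(|β|+1)) ∇ m_{(β₁,β₂+1)} − (β₁/(|β|+1)) m⊥ m_{(β₁-1,β₂)}`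
(when `β₁ = 0` the second summand vanishes since its scalar coefficient `β₁` is zero). -/
theorem scaled_monomial_decomposition_y (xE yE hE : ℝ) (hhE : 0 < hE) (β₁ β₂ : ℕ) (z : ℝ × ℝ) :
    (((0 : ℝ), smono xE yE hE (β₁, β₂) z) : ℝ × ℝ) =
      (hE / ((β₁ : ℝ) + (β₂ : ℝ) + 1)) • grad (smono xE yE hE (β₁, β₂ + 1)) z -
        ((β₁ : ℝ) / ((β₁ : ℝ) + (β₂ : ℝ) + 1)) •
          (smono xE yE hE (β₁ - 1, β₂) z • mperp xE yE hE z) := by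
  have hh : hE ≠ 0 := hhE.ne'
  have hd : (β₁ : ℝ) + β₂ + 1 ≠ 0 := by positivity
  rw [grad_smono]
  -- For `β₁ = n + 1` the natural-number subtraction in the exponent `β₁ - 1` is exact.
  rcases β₁ with _ | n
  · push_cast at hd ⊢
    rw [zero_add] at hd
    ext <;> simp [smono]
    field_simp
  · push_cast at hd ⊢
    ext <;> simp [smono, mperp, pow_succ] <;> field_simp <;> ring

end
end

section
/- Let E ⊂ ℝ² be a nonempty bounded open connected set whose topological boundary ∂E has finite and strictly positive 1-dimensional Hausdorff measure μ := H¹⌞∂E, and let k ∈ ℕ. If p ∈ [P_k(ℝ²)]² satisfies (i) ∫_E ε(p) : ε(q) dx = 0 for all q ∈ [P_k(ℝ²)]², and (ii) ∫_{∂E} p·(1,0) dμ = 0, ∫_{∂E} p·(0,1) dμ = 0 and ∫_{∂E} p·x⊥ dμ = 0, where x⊥(x,y) := (y,-x), then p = 0. -/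
/-!
Testing the orthogonality (i) with `q = p` gives `∫_E |ε(p)|² = 0`. The integrand is a nonnegative
continuous function on the open set `E`, so `ε(p) = 0` on `E`, and hence on all of `ℝ²`, because the
entries of `ε(p)` are polynomials and a polynomial vanishing on a nonempty open set is zero
(`eq_zero_of_eval_eq_zero_on_open`). A polynomial field with vanishing symmetric gradient is an
infinitesimal rigid motion `p(x, y) = (a + c y, b - c x)` (`exists_rigid_motion`).

For such a `p`, the pointwise identity `|p|² = a p₁ + b p₂ + c (p · x⊥)` turns the three moment
conditions (ii) into `∫_{∂E} |p|² dμ = 0`, so that `p = 0` holds `μ`-almost everywhere on `∂E`.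
If `c ≠ 0`, then `p` vanishes at one point only, and a point is `H¹`-null, which contradicts
`μ(∂E) > 0`. Therefore `c = 0`, and then `p` is a constant field with a zero.
-/

open Matrix

noncomputable section

open MeasureTheory

open MvPolynomial in
lemma hasFDerivAt_evalLM (P : MvPolynomial (Fin 2) ℝ) (z : ℝ × ℝ) :
    HasFDerivAt (evalLM P) (evalLM (pderiv 0 P) z • ContinuousLinearMap.fst ℝ ℝ ℝ +
      evalLM (pderiv 1 P) z • ContinuousLinearMap.snd ℝ ℝ ℝ) z := by
  have hmul (P Q : MvPolynomial (Fin 2) ℝ) : evalLM (P * Q) = evalLM P * evalLM Q := by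
    ext w; simp [evalLM]
  induction P using MvPolynomial.induction_on with
  | C a =>
    have h : evalLM (C a) = fun _ => a := by ext w; simp [evalLM]
    rw [h]
    refine (hasFDerivAt_const a z).congr_fderiv ?_
    simp
  | add P Q hP hQ =>
    rw [map_add]
    refine (hP.add hQ).congr_fderiv ?_
    simp only [map_add, Pi.add_apply]
    module
  | mul_X P i hP =>
    have hX : HasFDerivAt (evalLM (X i))
        (evalLM (pderiv 0 (X i)) z • ContinuousLinearMap.fst ℝ ℝ ℝ +
          evalLM (pderiv 1 (X i)) z • ContinuousLinearMap.snd ℝ ℝ ℝ) z := by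
      fin_cases i
      · have h : evalLM (X 0) = Prod.fst := by ext w; simp [evalLM]
        have h1 : evalLM 1 z = 1 := by simp [evalLM]
        simpa [h, h1, pderiv_X] using hasFDerivAt_fst
      · have h : evalLM (X 1) = Prod.snd := by ext w; simp [evalLM]
        have h1 : evalLM 1 z = 1 := by simp [evalLM]
        simpa [h, h1, pderiv_X] using hasFDerivAt_snd
    rw [hmul]
    refine (hP.mul hX).congr_fderiv ?_
    simp only [Derivation.leibniz, smul_eq_mul, map_add, hmul, Pi.add_apply, Pi.mul_apply]
    module

lemma continuous_evalLM (P : MvPolynomial (Fin 2) ℝ) : Continuous (evalLM P) :=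
  continuous_iff_continuousAt.2 fun z => (hasFDerivAt_evalLM P z).continuousAt

/-- Identity principle for polynomials: an open set contains a product of two open intervals, on
which a nonzero polynomial cannot vanish identically. -/
lemma eq_zero_of_eval_eq_zero_on_open {E : Set (ℝ × ℝ)} (hne : E.Nonempty) (hop : IsOpen E)
    {P : MvPolynomial (Fin 2) ℝ} (h : ∀ z ∈ E, evalLM P z = 0) : P = 0 := by
  obtain ⟨⟨a, b⟩, hz⟩ := hne
  obtain ⟨r, hr, hball⟩ := Metric.isOpen_iff.1 hop _ hz
  refine MvPolynomial.funext_set (fun i => Metric.ball (![a, b] i) r) (fun i => ?_) ?_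
  · rw [Real.ball_eq_Ioo]
    exact Set.Ioo_infinite (by linarith)
  · intro x hx
    have hxE : (x 0, x 1) ∈ E := by
      apply hball
      rw [← ball_prod_same]
      exact ⟨by simpa using hx 0 trivial, by simpa using hx 1 trivial⟩
    have hx' : x = ![x 0, x 1] := by ext i; fin_cases i <;> rfl
    rw [map_zero, hx']
    exact h _ hxE

open MvPolynomial in
lemma exists_const_of_pderiv_eq_zero {P : MvPolynomial (Fin 2) ℝ}
    (h0 : pderiv 0 P = 0) (h1 : pderiv 1 P = 0) : ∃ c : ℝ, ∀ z, evalLM P z = c := by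
  refine ⟨evalLM P 0, fun z => is_const_of_fderiv_eq_zero (𝕜 := ℝ)
    (fun w => (hasFDerivAt_evalLM P w).differentiableAt) (fun w => ?_) z 0⟩
  rw [(hasFDerivAt_evalLM P w).fderiv, h0, h1]
  simp

open MvPolynomial in
lemma pderiv_zero_one_comm (P : MvPolynomial (Fin 2) ℝ) :
    pderiv (0 : Fin 2) (pderiv 1 P) = pderiv 1 (pderiv 0 P) := by
  have h : ⁅pderiv (R := ℝ) (0 : Fin 2), pderiv (R := ℝ) (1 : Fin 2)⁆ = 0 := by
    ext i : 1
    fin_cases i <;> simp [Derivation.commutator_apply, pderiv_X]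
  have := congrArg (fun D : Derivation ℝ (MvPolynomial (Fin 2) ℝ) (MvPolynomial (Fin 2) ℝ) => D P) h
  simpa [Derivation.commutator_apply, sub_eq_zero] using this

open MvPolynomial in
/-- The kernel of the symmetric gradient on polynomial fields consists of infinitesimal rigid
motions: `∂_y P` has both partial derivatives zero, as `∂_y ∂_y P = -∂_y ∂_x Q = -∂_x ∂_y Q = 0`,
so it is a constant `c`, and subtracting `c y` from `P` and `-c x` from `Q` leaves constants. -/
lemma exists_rigid_motion {P Q : MvPolynomial (Fin 2) ℝ} (hP : pderiv 0 P = 0)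
    (hQ : pderiv 1 Q = 0) (hPQ : pderiv 1 P + pderiv 0 Q = 0) :
    ∃ a b c : ℝ, ∀ z, evalLM P z = a + c * z.2 ∧ evalLM Q z = b - c * z.1 := by
  have hyx : pderiv 0 (pderiv 1 P) = 0 := by rw [pderiv_zero_one_comm, hP, map_zero]
  have hyy : pderiv 1 (pderiv 1 P) = 0 := by
    rw [eq_neg_of_add_eq_zero_left hPQ, map_neg, ← pderiv_zero_one_comm, hQ, map_zero, neg_zero]
  obtain ⟨c, hc⟩ := exists_const_of_pderiv_eq_zero hyx hyy
  have hc' : pderiv 1 P = C c := by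
    refine sub_eq_zero.1 (eq_zero_of_eval_eq_zero_on_open (E := Set.univ) Set.univ_nonempty
      isOpen_univ fun z _ => ?_)
    rw [map_sub, Pi.sub_apply, hc]
    simp [evalLM]
  have hQ' : pderiv 0 Q = -C c := by rw [eq_neg_of_add_eq_zero_right hPQ, hc']
  obtain ⟨a, ha⟩ := exists_const_of_pderiv_eq_zero (P := (P - C c * X 1 : MvPolynomial (Fin 2) ℝ))
    (by simp [hP, pderiv_X]) (by simp [hc', pderiv_X])
  obtain ⟨b, hb⟩ := exists_const_of_pderiv_eq_zero (P := Q + C c * X 0)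
    (by simp [hQ', pderiv_X]) (by simp [hQ, pderiv_X])
  refine ⟨a, b, c, fun z => ⟨?_, ?_⟩⟩
  · have := ha z
    simp only [evalLM, LinearMap.coe_mk, AddHom.coe_mk, map_sub, map_mul, eval_C, eval_X] at this ⊢
    simp at this
    linarith
  · have := hb z
    simp only [evalLM, LinearMap.coe_mk, AddHom.coe_mk, map_add, map_mul, eval_C, eval_X] at this ⊢
    simp at this
    linarith

/-- If `p ∈ [P_k]²` has `∫_E ε(p) : ε(q) = 0` for all `q ∈ [P_k]²` and its
boundary moments against `(1,0)`, `(0,1)` and `x⊥ = (y, -x)` (w.r.t. the 1-dimensional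
Hausdorff measure on `∂E`) vanish, then `p = 0`. -/
theorem eps_projection_uniqueness (E : Set (ℝ × ℝ)) (hne : E.Nonempty) (hop : IsOpen E)
    (hbd : Bornology.IsBounded E) (hconn : IsConnected E)
    (hpos : 0 < μH[1] (frontier E)) (hfin : μH[1] (frontier E) < ⊤) (k : ℕ)
    (p : (ℝ × ℝ) → ℝ × ℝ) (hp : p ∈ PnVec k)
    (h1 : ∀ q ∈ PnVec k, (∫ z in E, frob (eps p z) (eps q z)) = 0)
    (h2 : (∫ z in frontier E, (p z).1 ∂μH[1]) = 0)
    (h3 : (∫ z in frontier E, (p z).2 ∂μH[1]) = 0)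
    (h4 : (∫ z in frontier E, ((p z).1 * z.2 + (p z).2 * (-z.1)) ∂μH[1]) = 0) :
    p = 0 := by
  obtain ⟨⟨P, -, hP⟩, ⟨Q, -, hQ⟩⟩ := id hp
  replace hP : (fun z => (p z).1) = evalLM P := hP.symm
  replace hQ : (fun z => (p z).2) = evalLM Q := hQ.symm
  have hPz (z) : (p z).1 = evalLM P z := congrFun hP z
  have hQz (z) : (p z).2 = evalLM Q z := congrFun hQ z
  set g : ℝ × ℝ → ℝ := fun z => evalLM (MvPolynomial.pderiv 0 P) z ^ 2 +
    evalLM (MvPolynomial.pderiv 1 Q) z ^ 2 +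
    2⁻¹ * evalLM (MvPolynomial.pderiv 1 P + MvPolynomial.pderiv 0 Q) z ^ 2 with hg
  have hfrob : (fun z => frob (eps p z) (eps p z)) = g := by
    ext z
    simp only [frob, eps, jmat, hP, hQ, (hasFDerivAt_evalLM P z).fderiv,
      (hasFDerivAt_evalLM Q z).fderiv, hg]
    simp [Fin.sum_univ_two]
    ring
  have hgc : Continuous g := by
    have := continuous_evalLM
    fun_prop
  have hg0 : ∀ z, 0 ≤ g z := fun z => by positivity
  have hgint : IntegrableOn g E :=
    (hgc.continuousOn.integrableOn_compact hbd.isCompact_closure).mono_set subset_closure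
  have hgE : Set.EqOn g 0 E := by
    refine Measure.eqOn_open_of_ae_eq (μ := volume) ?_ hop hgc.continuousOn continuousOn_const
    rw [← integral_eq_zero_iff_of_nonneg hg0 hgint, ← hfrob]
    exact h1 p hp
  have hsplit : ∀ z ∈ E, evalLM (MvPolynomial.pderiv 0 P) z = 0 ∧
      evalLM (MvPolynomial.pderiv 1 Q) z = 0 ∧
      evalLM (MvPolynomial.pderiv 1 P + MvPolynomial.pderiv 0 Q) z = 0 := by
    intro z hz
    have h : g z = 0 := hgE hz
    simp only [hg] at h
    refine ⟨?_, ?_, ?_⟩ <;> refine pow_eq_zero_iff two_ne_zero |>.1 ?_ <;> nlinarith [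
      sq_nonneg (evalLM (MvPolynomial.pderiv 0 P) z),
      sq_nonneg (evalLM (MvPolynomial.pderiv 1 Q) z),
      sq_nonneg (evalLM (MvPolynomial.pderiv 1 P + MvPolynomial.pderiv 0 Q) z)]
  obtain ⟨a, b, c, habc⟩ := exists_rigid_motion
    (eq_zero_of_eval_eq_zero_on_open hne hop fun z hz => (hsplit z hz).1)
    (eq_zero_of_eval_eq_zero_on_open hne hop fun z hz => (hsplit z hz).2.1)
    (eq_zero_of_eval_eq_zero_on_open hne hop fun z hz => (hsplit z hz).2.2)
  have hp1 (z) : (p z).1 = a + c * z.2 := (hPz z).trans (habc z).1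
  have hp2 (z) : (p z).2 = b - c * z.1 := (hQz z).trans (habc z).2
  have hcpt : IsCompact (frontier E) :=
    hbd.isCompact_closure.of_isClosed_subset isClosed_frontier frontier_subset_closure
  -- `μH[1]` is not finite on compact sets of the plane, so integrability over the frontier
  -- uses the finiteness of its measure.
  have hint {f : ℝ × ℝ → ℝ} (hf : Continuous f) : IntegrableOn f (frontier E) μH[1] := by
    obtain ⟨C, hC⟩ := hcpt.exists_bound_of_continuousOn hf.continuousOn
    exact IntegrableOn.of_bound hfin hf.aestronglyMeasurable C
      (ae_restrict_of_forall_mem hcpt.measurableSet hC)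
  have hsq : ∫ z in frontier E, ((p z).1 ^ 2 + (p z).2 ^ 2) ∂μH[1] = 0 := by
    have hi1 : IntegrableOn (fun z => (p z).1) (frontier E) μH[1] :=
      hint (by simp only [hp1]; fun_prop)
    have hi2 : IntegrableOn (fun z => (p z).2) (frontier E) μH[1] :=
      hint (by simp only [hp2]; fun_prop)
    have hi3 : IntegrableOn (fun z => (p z).1 * z.2 + (p z).2 * (-z.1)) (frontier E) μH[1] :=
      hint (by simp only [hp1, hp2]; fun_prop)
    calc ∫ z in frontier E, ((p z).1 ^ 2 + (p z).2 ^ 2) ∂μH[1]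
        = ∫ z in frontier E, (a * (p z).1 + b * (p z).2 +
            c * ((p z).1 * z.2 + (p z).2 * (-z.1))) ∂μH[1] := by
          congr 1; ext z; rw [hp1, hp2]; ring
      _ = 0 := by
          have hi12 : IntegrableOn (fun z => a * (p z).1 + b * (p z).2) (frontier E) μH[1] :=
            (hi1.const_mul a).add (hi2.const_mul b)
          rw [integral_add hi12 (hi3.const_mul c), integral_add (hi1.const_mul a) (hi2.const_mul b), integral_const_mul,
            integral_const_mul, integral_const_mul, h2, h3, h4]
          simp
  have hae : ∀ᵐ z ∂(μH[1] : Measure (ℝ × ℝ)).restrict (frontier E),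
      (p z).1 ^ 2 + (p z).2 ^ 2 = 0 :=
    (integral_eq_zero_iff_of_nonneg (fun z => by positivity)
      (hint (by simp only [hp1, hp2]; fun_prop))).1 hsq
  have hzero {z} (h : (p z).1 ^ 2 + (p z).2 ^ 2 = 0) : a + c * z.2 = 0 ∧ b - c * z.1 = 0 := by
    rw [← hp1, ← hp2]
    constructor <;> nlinarith [sq_nonneg (p z).1, sq_nonneg (p z).2]
  have hrne : (μH[1] : Measure (ℝ × ℝ)).restrict (frontier E) ≠ 0 := by
    rw [Ne, Measure.restrict_eq_zero]
    exact hpos.ne'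
  have hc : c = 0 := by
    by_contra hc
    have := Measure.nullSingletonClass_hausdorff (ℝ × ℝ) (d := 1) one_pos
    refine hrne (Measure.measure_univ_eq_zero.1 ?_)
    -- almost every point of the frontier is the centre `(b / c, -a / c)` of the rotation
    have hsub : ∀ᵐ z ∂(μH[1] : Measure (ℝ × ℝ)).restrict (frontier E),
        z ∈ ({(b / c, -a / c)} : Set (ℝ × ℝ)) := by
      filter_upwards [hae] with z hz
      obtain ⟨hz1, hz2⟩ := hzero hz
      refine Prod.ext ?_ ?_
      · change z.1 = b / c
        rw [eq_div_iff hc]; linarith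
      · change z.2 = -a / c
        rw [eq_div_iff hc]; linarith
    rw [measure_eq_measure_of_null_sdiff (Set.subset_univ {(b / c, -a / c)})
      (by rw [← Set.compl_eq_univ_sdiff]; exact hsub) |>.symm]
    exact measure_singleton _
  have : (ae ((μH[1] : Measure (ℝ × ℝ)).restrict (frontier E))).NeBot := ae_neBot.2 hrne
  obtain ⟨z, hz⟩ := hae.exists
  obtain ⟨ha, hb⟩ := hzero hz
  subst hc
  ext w
  · rw [hp1]; simpa using ha
  · rw [hp2]; simpa using hb


end
end
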